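/- Let μ be a deficient topological measure on a locally compact Hausdorff space X with μ(X) < ∞. Let (f_α) be an increasing net of bounded continuous real-valued functions converging uniformly to a bounded continuous function f, with f_α(X) ⊆ [a,b] and f(X) ⊆ [a,b] for all α. Then ∫_X f_α dμ → ∫_X f dμ; that is, the net ∫_a^b μ(f_α⁻¹((t,∞))) dt converges to ∫_a^b μ(f⁻¹((t,∞))) dt. -/

import Mathlib

open MeasureTheory Set Filter Topology ENNReal

/-- A deficient topological measure on a topological space `X`: a set function with values in
`[0,∞]` (recorded on all sets, but constrained only on open and closed sets) that is finitely
additive on disjoint compact sets, inner regular on open sets with respect to compact sets,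
and outer regular on closed sets with respect to open sets. -/
structure DeficientTopologicalMeasure (X : Type*) [TopologicalSpace X] where
  m : Set X → ℝ≥0∞
  additive : ∀ ⦃C K : Set X⦄, IsCompact C → IsCompact K → Disjoint C K →
    m (C ∪ K) = m C + m K
  innerRegular : ∀ ⦃U : Set X⦄, IsOpen U →
    m U = ⨆ (K : Set X) (_ : IsCompact K) (_ : K ⊆ U), m K
  outerRegular : ∀ ⦃F : Set X⦄, IsClosed F →
    m F = ⨅ (U : Set X) (_ : IsOpen U) (_ : F ⊆ U), m U

/-- A deficient topological measure is monotone on open sets. -/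
theorem DeficientTopologicalMeasure.mono_of_isOpen {X : Type*} [TopologicalSpace X]
    (μ : DeficientTopologicalMeasure X) {U V : Set X} (hU : IsOpen U) (hV : IsOpen V)
    (hUV : U ⊆ V) : μ.m U ≤ μ.m V := by
  rw [μ.innerRegular hU, μ.innerRegular hV]
  exact iSup_mono fun K => iSup_mono fun _ => iSup_mono' fun hKU => ⟨hKU.trans hUV, le_rfl⟩

/-- If `F` shifted left by `ε` lies below `G`, and `F` takes values in `[0, M]`, then the integral
of `F` exceeds that of `G` by at most `ε * M`. -/
theorem integral_le_integral_add_of_shift_le {F G : ℝ → ℝ} (hF : Antitone F) (hG : Antitone G)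
    {M ε a b : ℝ} (hε : 0 ≤ ε) (hF0 : ∀ t, 0 ≤ F t) (hFM : ∀ t, F t ≤ M)
    (hFG : ∀ t, F (t + ε) ≤ G t) (hab : a ≤ b) :
    ∫ t in a..b, F t ≤ (∫ t in a..b, G t) + ε * M := by
  have hint : ∀ c d, IntervalIntegrable F volume c d := fun _ _ => hF.intervalIntegrable
  have hshift : ∫ t in a..b, F (t + ε) = ∫ t in (a + ε)..(b + ε), F t :=
    intervalIntegral.integral_comp_add_right F ε
  have hle : ∫ t in a..b, F (t + ε) ≤ ∫ t in a..b, G t :=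
    intervalIntegral.integral_mono_on hab
      (Antitone.intervalIntegrable fun _ _ h => hF (by gcongr)) hG.intervalIntegrable
      fun t _ => hFG t
  have hleft : ∫ t in a..(a + ε), F t ≤ ε * M := by
    have h := intervalIntegral.integral_mono_on (by linarith) (hint a (a + ε))
      intervalIntegrable_const fun t _ => hFM t
    simpa using h
  have hright : 0 ≤ ∫ t in b..(b + ε), F t :=
    intervalIntegral.integral_nonneg (by linarith) fun t _ => hF0 t
  have h₁ := intervalIntegral.integral_add_adjacent_intervals (hint a b) (hint b (b + ε))
  have h₂ := intervalIntegral.integral_add_adjacent_intervals (hint a (a + ε))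
    (hint (a + ε) (b + ε))
  linarith

/-- Two antitone functions with values in `[0, M]`, each lying above the other shifted left by
`ε`, have integrals at distance at most `ε * M`. -/
theorem abs_integral_sub_integral_le_of_shift_le {F G : ℝ → ℝ} (hF : Antitone F)
    (hG : Antitone G) {M ε : ℝ} (a b : ℝ) (hε : 0 ≤ ε) (hF0 : ∀ t, 0 ≤ F t)
    (hFM : ∀ t, F t ≤ M) (hG0 : ∀ t, 0 ≤ G t) (hGM : ∀ t, G t ≤ M)
    (hFG : ∀ t, F (t + ε) ≤ G t) (hGF : ∀ t, G (t + ε) ≤ F t) :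
    |(∫ t in a..b, F t) - ∫ t in a..b, G t| ≤ ε * M := by
  wlog hab : a ≤ b generalizing a b
  · have h := this b a (le_of_not_ge hab)
    rw [intervalIntegral.integral_symm a b, intervalIntegral.integral_symm a b,
      neg_sub_neg, abs_sub_comm] at h
    exact h
  have h₁ := integral_le_integral_add_of_shift_le hF hG hε hF0 hFM hFG hab
  have h₂ := integral_le_integral_add_of_shift_le hG hF hε hG0 hGM hGF hab
  rw [abs_le]
  constructor <;> linarith

/-- Let `μ` be a finite deficient topological measure on a locally compact
Hausdorff space, and `(f_α)` an increasing net of bounded continuous functions converging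
uniformly to a bounded continuous `f`, all with ranges in `[a,b]`. Then
`∫_a^b μ(f_α⁻¹((t,∞))) dt → ∫_a^b μ(f⁻¹((t,∞))) dt`, i.e. `∫_X f_α dμ → ∫_X f dμ`. -/
theorem stmt17 {X : Type*} [TopologicalSpace X] [LocallyCompactSpace X] [T2Space X]
    {ι : Type*} [Preorder ι] [IsDirected ι (· ≤ ·)] [Nonempty ι]
    (μ : DeficientTopologicalMeasure X) (hμfin : μ.m univ < ∞)
    (a b : ℝ) (f : ι → X → ℝ) (f₀ : X → ℝ)
    (hfc : ∀ α, Continuous (f α)) (hf₀c : Continuous f₀)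
    (hfab : ∀ α, ∀ x, f α x ∈ Icc a b) (hf₀ab : ∀ x, f₀ x ∈ Icc a b)
    (hmono : ∀ ⦃α β : ι⦄, α ≤ β → ∀ x, f α x ≤ f β x)
    (hunif : TendstoUniformly f f₀ atTop) :
    Tendsto (fun α => ∫ t in a..b, (μ.m (f α ⁻¹' (Ioi t))).toReal) atTop
      (nhds (∫ t in a..b, (μ.m (f₀ ⁻¹' (Ioi t))).toReal)) := by
  have hanti : ∀ {g : X → ℝ} {s t : ℝ} {h : X → ℝ}, Continuous g → Continuous h →
      h ⁻¹' Ioi t ⊆ g ⁻¹' Ioi s →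
      (μ.m (h ⁻¹' Ioi t)).toReal ≤ (μ.m (g ⁻¹' Ioi s)).toReal := by
    intro g s t h hg hh hsub
    have hgo := isOpen_Ioi.preimage hg (t := Ioi s)
    exact ENNReal.toReal_mono
      ((μ.mono_of_isOpen hgo isOpen_univ (subset_univ _)).trans_lt hμfin).ne
      (μ.mono_of_isOpen (isOpen_Ioi.preimage hh) hgo hsub)
  have hantitone : ∀ {g : X → ℝ}, Continuous g →
      Antitone fun t => (μ.m (g ⁻¹' Ioi t)).toReal := fun hg _ _ hst =>
    hanti hg hg (preimage_mono (Ioi_subset_Ioi hst))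
  have hbound : ∀ {g : X → ℝ}, Continuous g → ∀ t,
      (μ.m (g ⁻¹' Ioi t)).toReal ≤ (μ.m univ).toReal := fun hg t =>
    ENNReal.toReal_mono hμfin.ne
      (μ.mono_of_isOpen (isOpen_Ioi.preimage hg) isOpen_univ (subset_univ _))
  rw [Metric.tendsto_nhds]
  intro δ hδ
  set M := (μ.m univ).toReal
  have hM0 : 0 ≤ M := ENNReal.toReal_nonneg
  have hε : 0 < δ / (M + 1) := by positivity
  filter_upwards [Metric.tendstoUniformly_iff.1 hunif _ hε] with α hα
  rw [Real.dist_eq]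
  refine (abs_integral_sub_integral_le_of_shift_le (hantitone (hfc α)) (hantitone hf₀c) a b hε.le
    (fun _ => ENNReal.toReal_nonneg) (hbound (hfc α)) (fun _ => ENNReal.toReal_nonneg)
    (hbound hf₀c) (fun t => hanti hf₀c (hfc α) fun x hx => ?_)
    (fun t => hanti (hfc α) hf₀c fun x hx => ?_)).trans_lt ?_
  · have h := abs_lt.1 (Real.dist_eq _ _ ▸ hα x)
    simp only [mem_preimage, mem_Ioi] at hx ⊢
    linarith [h.1]
  · have h := abs_lt.1 (Real.dist_eq _ _ ▸ hα x)
    simp only [mem_preimage, mem_Ioi] at hx ⊢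
    linarith [h.2]
  · rw [div_mul_eq_mul_div, div_lt_iff₀ (by positivity)]
    nlinarith
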